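/- Decomposition of the kick-error into two-body and three-body contributions (paper eqs. 20a–20b): let V = Σ_{i<j} V_ij be the total potential energy. At every phase-space point where all pairwise separations are nonzero, {{T, V}, V} = Σ_{i<j} {{T, V_ij}, V_ij} + 2 Σ_{i<j<k} ( {{T, V_ij}, V_ik} + {{T, V_jk}, V_ji} + {{T, V_ki}, V_kj} ), where V_ji = V_ij. -/

import Mathlib

open scoped RealInnerProductSpace BigOperators

noncomputable section

/-- Three-dimensional Euclidean space. -/
abbrev E3 : Type := EuclideanSpace ℝ (Fin 3)

/-- Phase space for `N` particles: positions and momenta. -/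
abbrev Phase (N : ℕ) : Type := (Fin N → E3) × (Fin N → E3)

/-- Gradient of a phase-space function with respect to the `k`-th position. -/
def gradPos {N : ℕ} (A : Phase N → ℝ) (k : Fin N) (w : Phase N) : E3 :=
  gradient (fun y => A (Function.update w.1 k y, w.2)) (w.1 k)

/-- Gradient of a phase-space function with respect to the `k`-th momentum. -/
def gradMom {N : ℕ} (A : Phase N → ℝ) (k : Fin N) (w : Phase N) : E3 :=
  gradient (fun y => A (w.1, Function.update w.2 k y)) (w.2 k)

/-- Canonical Poisson bracket of two phase-space functions. -/
def poisson {N : ℕ} (A B : Phase N → ℝ) (w : Phase N) : ℝ :=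
  ∑ k, (⟪gradPos A k w, gradMom B k w⟫ - ⟪gradMom A k w, gradPos B k w⟫)

/-- Kinetic energy `T = Σ_i ‖p_i‖²/(2 m_i)`. -/
def kinetic {N : ℕ} (m : Fin N → ℝ) (w : Phase N) : ℝ :=
  ∑ i, ‖w.2 i‖ ^ 2 / (2 * m i)

/-- Pair potential `V_ij = −G m_i m_j / ‖x_i − x_j‖`. -/
def pairPot {N : ℕ} (G : ℝ) (m : Fin N → ℝ) (i j : Fin N) (w : Phase N) : ℝ :=
  -(G * m i * m j) / ‖w.1 i - w.1 j‖

section helpers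

lemma sum_update_split {N : ℕ} (ψ : Fin N → E3 → ℝ) (p : Fin N → E3) (k : Fin N) (y : E3) :
    ∑ i, ψ i (Function.update p k y i) = ψ k y + ∑ i ∈ Finset.univ.erase k, ψ i (p i) := by
  rw [← Finset.add_sum_erase _ _ (Finset.mem_univ k)]
  congr 1
  · simp
  · apply Finset.sum_congr rfl
    intro i hi
    rw [Function.update_of_ne (Finset.ne_of_mem_erase hi)]

lemma gradMom_kinetic {N : ℕ} (m : Fin N → ℝ) (hm : ∀ i, 0 < m i) (k : Fin N) (w : Phase N) :
    gradMom (kinetic m) k w = (m k)⁻¹ • w.2 k := by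
  unfold gradMom kinetic
  simp only []
  have : (fun y : E3 => ∑ i, ‖Function.update w.2 k y i‖ ^ 2 / (2 * m i)) =
      fun y => ‖y‖ ^ 2 / (2 * m k) +
        ∑ i ∈ Finset.univ.erase k, ‖w.2 i‖ ^ 2 / (2 * m i) := by
    funext y
    exact sum_update_split (fun i z => ‖z‖ ^ 2 / (2 * m i)) w.2 k y
  rw [this]
  apply HasGradientAt.gradient
  rw [hasGradientAt_iff_hasFDerivAt]
  have h := ((hasStrictFDerivAt_norm_sq (w.2 k)).hasFDerivAt.mul_const (2 * m k)⁻¹).add_const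
    (∑ i ∈ Finset.univ.erase k, ‖w.2 i‖ ^ 2 / (2 * m i))
  simp only [div_eq_mul_inv] at h ⊢
  refine h.congr_fderiv ?_
  refine ContinuousLinearMap.ext fun v => ?_
  have := (hm k).ne'
  symm
  change ⟪(m k)⁻¹ • w.2 k, v⟫ = (2 * m k)⁻¹ * ((2 • innerSL ℝ (w.2 k)) v)
  rw [inner_smul_left, ContinuousLinearMap.smul_apply]
  simp
  field_simp

lemma gradient_inner_const (a : E3) (C : ℝ) (x : E3) :
    gradient (fun y : E3 => ⟪a, y⟫ + C) x = a := by
  apply HasGradientAt.gradient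
  rw [hasGradientAt_iff_hasFDerivAt]
  exact ((InnerProductSpace.toDual ℝ E3 a).hasFDerivAt (x := x)).add_const C

/-- A position-only function. -/
def PosOnly {N : ℕ} (U : Phase N → ℝ) : Prop := ∀ x p q, U (x, p) = U (x, q)

lemma gradMom_posOnly {N : ℕ} {U : Phase N → ℝ} (hU : PosOnly U) (k : Fin N) (w : Phase N) :
    gradMom U k w = 0 := by
  unfold gradMom
  have : (fun y => U (w.1, Function.update w.2 k y)) = fun _ => U w := by
    funext y; exact hU _ _ _
  rw [this]
  exact gradient_fun_const _ _

lemma gradPos_posOnly {N : ℕ} {U : Phase N → ℝ} (hU : PosOnly U) (k : Fin N)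
    (x p q : Fin N → E3) : gradPos U k (x, p) = gradPos U k (x, q) := by
  unfold gradPos
  simp only []
  congr 1
  funext y
  exact hU _ _ _

lemma poisson_kinetic {N : ℕ} (m : Fin N → ℝ) (hm : ∀ i, 0 < m i) {U : Phase N → ℝ}
    (hU : PosOnly U) (w : Phase N) :
    poisson (kinetic m) U w = ∑ k, ⟪-(m k)⁻¹ • gradPos U k w, w.2 k⟫ := by
  unfold poisson
  apply Finset.sum_congr rfl
  intro k _
  rw [gradMom_posOnly hU, gradMom_kinetic m hm, inner_zero_right, inner_smul_left,
    inner_smul_left, real_inner_comm]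
  simp

lemma gradMom_poisson {N : ℕ} (m : Fin N → ℝ) (hm : ∀ i, 0 < m i) {U : Phase N → ℝ}
    (hU : PosOnly U) (k : Fin N) (w : Phase N) :
    gradMom (poisson (kinetic m) U) k w = -(m k)⁻¹ • gradPos U k w := by
  unfold gradMom
  have : (fun y => poisson (kinetic m) U (w.1, Function.update w.2 k y)) =
      fun y => ⟪-(m k)⁻¹ • gradPos U k w, y⟫ +
        ∑ i ∈ Finset.univ.erase k, ⟪-(m i)⁻¹ • gradPos U i w, w.2 i⟫ := by
    funext y
    rw [poisson_kinetic m hm hU,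
      ← sum_update_split (fun i z => ⟪-(m i)⁻¹ • gradPos U i w, z⟫) w.2 k y]
    apply Finset.sum_congr rfl
    intro i _
    rw [gradPos_posOnly hU i w.1 _ w.2]
  rw [this, gradient_inner_const]

lemma poisson_poisson {N : ℕ} (m : Fin N → ℝ) (hm : ∀ i, 0 < m i) {U W : Phase N → ℝ}
    (hU : PosOnly U) (hW : PosOnly W) (w : Phase N) :
    poisson (poisson (kinetic m) U) W w =
      ∑ k, (m k)⁻¹ * ⟪gradPos U k w, gradPos W k w⟫ := by
  rw [poisson]
  apply Finset.sum_congr rfl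
  intro k _
  rw [gradMom_posOnly hW, gradMom_poisson m hm hU, inner_zero_right, inner_smul_left]
  simp

lemma posOnly_pairPot {N : ℕ} (G : ℝ) (m : Fin N → ℝ) (i j : Fin N) :
    PosOnly (pairPot G m i j) := fun _ _ _ => rfl

lemma pairPot_symm {N : ℕ} (G : ℝ) (m : Fin N → ℝ) (i j : Fin N) :
    pairPot G m i j = pairPot G m j i := by
  funext w
  unfold pairPot
  rw [norm_sub_rev]
  ring

lemma gradPos_pairPot_zero {N : ℕ} (G : ℝ) (m : Fin N → ℝ) (i j k : Fin N) (w : Phase N)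
    (hi : i ≠ k) (hj : j ≠ k) : gradPos (pairPot G m i j) k w = 0 := by
  unfold gradPos pairPot
  simp only [Function.update_of_ne hi, Function.update_of_ne hj]
  exact gradient_fun_const _ _

lemma gradPos_pairPot_diag {N : ℕ} (G : ℝ) (m : Fin N → ℝ) (i k : Fin N) (w : Phase N) :
    gradPos (pairPot G m i i) k w = 0 := by
  unfold gradPos pairPot
  simp only [sub_self]
  exact gradient_fun_const _ _

lemma diff_pairPot {N : ℕ} (G : ℝ) (m : Fin N → ℝ) (i j k : Fin N) (w : Phase N)
    (h : w.1 i - w.1 j ≠ 0) :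
    DifferentiableAt ℝ (fun y => pairPot G m i j (Function.update w.1 k y, w.2)) (w.1 k) := by
  unfold pairPot
  have hu : ∀ l, DifferentiableAt ℝ (fun y => Function.update w.1 k y l) (w.1 k) := by
    intro l
    by_cases hl : l = k
    · subst hl; simp
    · simp [Function.update_of_ne hl]
  have h0 : Function.update w.1 k (w.1 k) i - Function.update w.1 k (w.1 k) j ≠ 0 := by
    simpa using h
  have hn : DifferentiableAt ℝ
      (fun y => ‖Function.update w.1 k y i - Function.update w.1 k y j‖) (w.1 k) :=
    ((hu i).sub (hu j)).norm ℝ h0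
  simp only [div_eq_mul_inv]
  exact (hn.inv (norm_ne_zero_iff.2 h0)).const_mul _

lemma gradPos_V {N : ℕ} (G : ℝ) (m : Fin N → ℝ) (w : Phase N)
    (hr : ∀ i j : Fin N, i ≠ j → ‖w.1 i - w.1 j‖ ≠ 0) (k : Fin N) :
    gradPos (fun w' => ∑ i, ∑ j ∈ Finset.Ioi i, pairPot G m i j w') k w =
      ∑ i, ∑ j ∈ Finset.Ioi i, gradPos (pairPot G m i j) k w := by
  unfold gradPos gradient
  have hd : ∀ i, ∀ j ∈ Finset.Ioi i, DifferentiableAt ℝ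
      (fun y => pairPot G m i j (Function.update w.1 k y, w.2)) (w.1 k) := fun i j hj =>
    diff_pairPot G m i j k w (norm_ne_zero_iff.1 (hr i j (Finset.mem_Ioi.1 hj).ne))
  rw [fderiv_fun_sum (fun i _ => DifferentiableAt.fun_sum (hd i)), map_sum]
  apply Finset.sum_congr rfl
  intro i _
  rw [fderiv_fun_sum (hd i), map_sum]

lemma sum_Ioi_ite {N : ℕ} {M : Type*} [AddCommMonoid M] (i : Fin N) (f : Fin N → M) :
    ∑ j ∈ Finset.Ioi i, f j = ∑ j, if i < j then f j else 0 := by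
  rw [← Finset.sum_filter]
  congr 1
  ext j; simp

lemma sum_pairs {N : ℕ} {M : Type*} [AddCommMonoid M] (f : Fin N → Fin N → M)
    (h0 : ∀ i, f i i = 0) :
    ∑ i, ∑ j, f i j = ∑ i, ∑ j ∈ Finset.Ioi i, (f i j + f j i) := by
  simp only [Finset.sum_add_distrib, sum_Ioi_ite]
  rw [Finset.sum_comm (f := fun i j => if i < j then f j i else 0), ← Finset.sum_add_distrib]
  refine Finset.sum_congr rfl fun i _ => ?_
  rw [← Finset.sum_add_distrib]
  refine Finset.sum_congr rfl fun j _ => ?_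
  rcases lt_trichotomy i j with h | h | h
  · simp [h, h.not_gt]
  · subst h; simp [h0]
  · simp [h, h.not_gt]

lemma sum_rot {N : ℕ} (f : Fin N → Fin N → Fin N → ℝ) :
    ∑ i, ∑ j, ∑ k, f i j k = ∑ i, ∑ j, ∑ k, f k i j := by
  rw [Finset.sum_comm]
  refine Finset.sum_congr rfl fun j _ => ?_
  exact Finset.sum_comm

lemma sum_triples {N : ℕ} (c : Fin N → Fin N → Fin N → ℝ)
    (hs : ∀ i j k, c i j k = c i k j) (h0 : ∀ i k, c i i k = 0) :
    ∑ i, ∑ j, ∑ k, c i j k =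
      (∑ i, ∑ j ∈ Finset.Ioi i, (c i j j + c j i i)) +
      2 * ∑ i, ∑ j ∈ Finset.Ioi i, ∑ k ∈ Finset.Ioi j, (c i j k + c j k i + c k i j) := by
  have h0' : ∀ i k, c i k i = 0 := fun i k => by rw [hs, h0]
  rw [← sum_pairs (fun i j => c i j j) (fun i => h0 i i)]
  have e1 : ∑ i, ∑ j ∈ Finset.Ioi i, ∑ k ∈ Finset.Ioi j, (c i j k + c j k i + c k i j) =
      (∑ i, ∑ j, ∑ k, if i < j ∧ j < k then c i j k else 0) +
      (∑ i, ∑ j, ∑ k, if i < j ∧ j < k then c j k i else 0) +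
      (∑ i, ∑ j, ∑ k, if i < j ∧ j < k then c k i j else 0) := by
    simp only [sum_Ioi_ite, ← Finset.sum_add_distrib]
    refine Finset.sum_congr rfl fun i _ => Finset.sum_congr rfl fun j _ => ?_
    by_cases h : i < j
    · simp only [h, true_and, if_true]
      refine Finset.sum_congr rfl fun k _ => ?_
      split_ifs <;> simp
    · simp [h]
  have e2 : (∑ i, ∑ j, ∑ k, if i < j ∧ j < k then c j k i else 0) =
      ∑ i, ∑ j, ∑ k, if k < i ∧ i < j then c i j k else 0 :=
    sum_rot (fun i j k => if i < j ∧ j < k then c j k i else 0)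
  have e3 : (∑ i, ∑ j, ∑ k, if i < j ∧ j < k then c k i j else 0) =
      ∑ i, ∑ j, ∑ k, if j < k ∧ k < i then c i j k else 0 :=
    (sum_rot (fun i j k => if j < k ∧ k < i then c i j k else 0)).symm
  have sw : ∀ f : Fin N → Fin N → Fin N → ℝ, 2 * ∑ i, ∑ j, ∑ k, f i j k =
      ∑ i, ∑ j, ∑ k, (f i j k + f i k j) := by
    intro f
    simp only [Finset.sum_add_distrib]
    rw [two_mul]
    congr 1
    exact Finset.sum_congr rfl fun i _ => Finset.sum_comm
  have e4 : ∀ i j, c i j j = ∑ k, if j = k then c i j k else 0 := by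
    intro i j; simp
  rw [e1, e2, e3, mul_add, mul_add, sw, sw, sw]
  simp only [e4]
  simp only [← Finset.sum_add_distrib]
  refine Finset.sum_congr rfl fun i _ => Finset.sum_congr rfl fun j _ =>
    Finset.sum_congr rfl fun k _ => ?_
  rw [hs i k j]
  by_cases hij : i = j
  · subst hij; simp [h0]
  by_cases hik : i = k
  · subst hik; simp [h0']
  by_cases hjk : j = k
  · subst hjk; simp; grind
  rcases lt_or_gt_of_ne hij with a | a <;> rcases lt_or_gt_of_ne hik with b | b <;>
    rcases lt_or_gt_of_ne hjk with d | d <;>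
    simp [a, b, d, a.not_gt, b.not_gt, d.not_gt, hjk] <;> order

end helpers

/-- Decomposition of the kick-error into two-body and three-body contributions
(paper eqs. 20a–20b): with `V = Σ_{i<j} V_ij`,
`{{T,V},V} = Σ_{i<j} {{T,V_ij},V_ij}
  + 2 Σ_{i<j<k} ({{T,V_ij},V_ik} + {{T,V_jk},V_ji} + {{T,V_ki},V_kj})`
wherever all pairwise separations are nonzero. -/
theorem kick_error_decomposition {N : ℕ} (G : ℝ) (hG : 0 < G)
    (m : Fin N → ℝ) (hm : ∀ i, 0 < m i) (w : Phase N)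
    (hr : ∀ i j : Fin N, i ≠ j → ‖w.1 i - w.1 j‖ ≠ 0) :
    poisson
        (poisson (kinetic m)
          (fun w' => ∑ i, ∑ j ∈ Finset.Ioi i, pairPot G m i j w'))
        (fun w' => ∑ i, ∑ j ∈ Finset.Ioi i, pairPot G m i j w') w =
      (∑ i, ∑ j ∈ Finset.Ioi i,
        poisson (poisson (kinetic m) (pairPot G m i j)) (pairPot G m i j) w) +
      2 * ∑ i, ∑ j ∈ Finset.Ioi i, ∑ k ∈ Finset.Ioi j,
        (poisson (poisson (kinetic m) (pairPot G m i j)) (pairPot G m i k) w +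
         poisson (poisson (kinetic m) (pairPot G m j k)) (pairPot G m j i) w +
         poisson (poisson (kinetic m) (pairPot G m k i)) (pairPot G m k j) w) := by
  set V : Phase N → ℝ := fun w' => ∑ i, ∑ j ∈ Finset.Ioi i, pairPot G m i j w' with hV
  have hVp : PosOnly V := fun _ _ _ => rfl
  have hP := posOnly_pairPot G m
  simp only [poisson_poisson m hm hVp hVp, poisson_poisson m hm (hP _ _) (hP _ _)]
  set g : Fin N → Fin N → Fin N → E3 := fun i j k => gradPos (pairPot G m i j) k w with hg
  have gs : ∀ i j k, g i j k = g j i k := fun i j k => by simp only [hg, pairPot_symm G m i j]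
  have gd : ∀ i k, g i i k = 0 := fun i k => gradPos_pairPot_diag G m i k w
  have gz : ∀ i j k, i ≠ k → j ≠ k → g i j k = 0 := fun i j k hi hj =>
    gradPos_pairPot_zero G m i j k w hi hj
  have hgV : ∀ k, gradPos V k w = ∑ j, g k j k := by
    intro k
    rw [hV, gradPos_V G m w hr k]
    have h1 := sum_pairs (fun i j => if i = k then g i j k else 0) (by simp [gd])
    rw [Finset.sum_eq_single k (by intro b _ hb; simp [hb]) (by simp)] at h1
    simp only [if_true] at h1
    rw [h1]
    refine Finset.sum_congr rfl fun i _ => Finset.sum_congr rfl fun j hj => ?_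
    have hij : i ≠ j := (Finset.mem_Ioi.1 hj).ne
    change g i j k = _
    by_cases hi : i = k
    · subst hi; simp [hij.symm]
    · by_cases hj' : j = k
      · simp [hi, hj', gs i k k]
      · simp [hi, hj', gz i j k hi hj']
  have hc := sum_triples (fun i j k => (m i)⁻¹ * ⟪g i j i, g i k i⟫)
    (fun i j k => by rw [real_inner_comm]) (fun i k => by simp [gd])
  have two : ∀ i j, i ≠ j → ∑ k, (m k)⁻¹ * ⟪g i j k, g i j k⟫ =
      (m i)⁻¹ * ⟪g i j i, g i j i⟫ + (m j)⁻¹ * ⟪g j i j, g j i j⟫ := by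
    intro i j hij
    rw [Finset.sum_eq_add i j hij, gs j i j]
    · rintro k _ ⟨h1, h2⟩
      simp [gz i j k h1.symm h2.symm]
    · simp
    · simp
  have three : ∀ i j l, i ≠ j → i ≠ l → j ≠ l → ∑ k, (m k)⁻¹ * ⟪g i j k, g i l k⟫ =
      (m i)⁻¹ * ⟪g i j i, g i l i⟫ := by
    intro i j l h1 h2 h3
    rw [Finset.sum_eq_single i]
    · intro k _ hk
      by_cases hj : j = k
      · rw [gz i l k hk.symm (by rw [← hj]; exact h3.symm)]; simp
      · rw [gz i j k hk.symm hj]; simp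
    · simp
  change ∑ k, (m k)⁻¹ * ⟪gradPos V k w, gradPos V k w⟫ =
    (∑ i, ∑ j ∈ Finset.Ioi i, ∑ k, (m k)⁻¹ * ⟪g i j k, g i j k⟫) +
    2 * ∑ i, ∑ j ∈ Finset.Ioi i, ∑ l ∈ Finset.Ioi j,
      (∑ k, (m k)⁻¹ * ⟪g i j k, g i l k⟫ + ∑ k, (m k)⁻¹ * ⟪g j l k, g j i k⟫ +
       ∑ k, (m k)⁻¹ * ⟪g l i k, g l j k⟫)
  refine Eq.trans ?_ (hc.trans ?_)
  · refine Finset.sum_congr rfl fun i _ => ?_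
    rw [hgV, sum_inner, Finset.mul_sum]
    refine Finset.sum_congr rfl fun j _ => ?_
    rw [inner_sum, Finset.mul_sum]
  · congr 1
    · refine Finset.sum_congr rfl fun i _ => Finset.sum_congr rfl fun j hj => ?_
      exact (two i j (Finset.mem_Ioi.1 hj).ne).symm
    · congr 1
      refine Finset.sum_congr rfl fun i _ => Finset.sum_congr rfl fun j hj =>
        Finset.sum_congr rfl fun l hl => ?_
      have a := Finset.mem_Ioi.1 hj
      have b := Finset.mem_Ioi.1 hl
      have d := a.trans b
      rw [three i j l a.ne d.ne b.ne, three j l i b.ne a.ne' d.ne', three l i j d.ne' b.ne' a.ne]
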